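/- Let G₁, G₂ ∈ ℂ^{m×n} with rank(G₁) = rank(G₂) = min{m,n}. Then ‖G₂⁺ − G₁⁺‖ ≤ √2 · ‖G₂⁺‖ · ‖G₁⁺‖ · ‖G₂ − G₁‖ in the spectral norm. -/

import Mathlib

open Matrix

/-- `P` is the Moore–Penrose pseudoinverse of `A` (the four Penrose conditions). -/
def IsMoorePenrose {m n : ℕ} (A : Matrix (Fin m) (Fin n) ℂ) (P : Matrix (Fin n) (Fin m) ℂ) :
    Prop :=
  A * P * A = A ∧ P * A * P = P ∧ (A * P)ᴴ = A * P ∧ (P * A)ᴴ = P * A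

/-- The spectral norm (ℓ²-operator norm) of a complex matrix. -/
noncomputable def specNorm {m n : ℕ} (A : Matrix (Fin m) (Fin n) ℂ) : ℝ :=
  ‖LinearMap.toContinuousLinearMap (Matrix.toEuclideanLin A)‖

/-!
Suppose `ker G₁ = ker G₂`, as happens when both have full column rank. Then `P₂ G₂` projects onto
`(ker G₂)ᗮ = (ker G₁)ᗮ = ran P₁`, so `P₂ G₂ P₁ = P₁`, and with `E = G₂ - G₁`

  `P₂ - P₁ = P₂ (1 - G₁ P₁) - P₂ E P₁`.

The two terms live on the orthogonal subspaces `(ran G₁)ᗮ` and `ran G₁`, so their squared norms add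
up. The second is at most `‖P₂‖ ‖E‖ ‖P₁‖`. In the first, `P₂ = P₂ P₂* G₂*` and
`G₁* (1 - G₁ P₁) = 0` turn `P₂ (1 - G₁ P₁)` into `P₂ P₂* E* (1 - G₁ P₁)`, of norm at most
`‖P₂‖² ‖E‖`, which is no larger than `‖P₂‖ ‖P₁‖ ‖E‖` if `‖P₂‖ ≤ ‖P₁‖`; otherwise exchange the two
operators. The case `ran G₁ = ran G₂` follows by taking adjoints.
-/

section Hilbert

open ContinuousLinearMap
open scoped InnerProduct

variable {𝕜 E F : Type*} [RCLike 𝕜]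
  [NormedAddCommGroup E] [InnerProductSpace 𝕜 E] [CompleteSpace E]
  [NormedAddCommGroup F] [InnerProductSpace 𝕜 F] [CompleteSpace F]

theorem norm_comp_adjoint_self (A : E →L[𝕜] F) : ‖A ∘L A†‖ = ‖A‖ ^ 2 := by
  simpa [sq] using norm_adjoint_comp_self (A†)

theorem norm_sub_sq_le_of_comp_adjoint_eq_zero {A B : E →L[𝕜] F} (h : A ∘L B† = 0) :
    ‖A - B‖ ^ 2 ≤ ‖A‖ ^ 2 + ‖B‖ ^ 2 := by
  have h' : B ∘L A† = 0 := by simpa [adjoint_comp] using congrArg adjoint h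
  have expand : (A - B) ∘L (A - B)† = A ∘L A† + B ∘L B† := by
    simp [sub_comp, comp_sub, h, h']
  calc ‖A - B‖ ^ 2 = ‖A ∘L A† + B ∘L B†‖ := by rw [← norm_comp_adjoint_self, expand]
    _ ≤ ‖A ∘L A†‖ + ‖B ∘L B†‖ := norm_add_le _ _
    _ = ‖A‖ ^ 2 + ‖B‖ ^ 2 := by simp only [norm_comp_adjoint_self]

/-- `P` is the Moore–Penrose pseudoinverse of the bounded operator `A` between Hilbert spaces, in
the sense of the four Penrose conditions. This is the coordinate-free form of `IsMoorePenrose`, for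
which the perturbation bound is proved. -/
structure IsPseudoinverse (A : E →L[𝕜] F) (P : F →L[𝕜] E) : Prop where
  comp_comp_self : A ∘L P ∘L A = A
  self_comp_comp : P ∘L A ∘L P = P
  isSelfAdjoint_comp : IsSelfAdjoint (A ∘L P)
  isSelfAdjoint_comp_rev : IsSelfAdjoint (P ∘L A)

namespace IsPseudoinverse

variable {A G₁ G₂ : E →L[𝕜] F} {P P₁ P₂ : F →L[𝕜] E}

theorem symm (h : IsPseudoinverse A P) : IsPseudoinverse P A :=
  ⟨h.self_comp_comp, h.comp_comp_self, h.isSelfAdjoint_comp_rev, h.isSelfAdjoint_comp⟩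

theorem adjoint_comp_adjoint (h : IsPseudoinverse A P) : P† ∘L A† = A ∘L P := by
  rw [← adjoint_comp]
  exact h.isSelfAdjoint_comp.adjoint_eq

theorem adjoint (h : IsPseudoinverse A P) : IsPseudoinverse (A†) (P†) where
  comp_comp_self := by rw [← adjoint_comp, ← adjoint_comp, comp_assoc, h.comp_comp_self]
  self_comp_comp := by rw [← adjoint_comp, ← adjoint_comp, comp_assoc, h.self_comp_comp]
  isSelfAdjoint_comp := h.symm.adjoint_comp_adjoint ▸ h.isSelfAdjoint_comp_rev
  isSelfAdjoint_comp_rev := h.adjoint_comp_adjoint ▸ h.isSelfAdjoint_comp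

theorem isStarProjection_comp (h : IsPseudoinverse A P) : IsStarProjection (A ∘L P) where
  isIdempotentElem := by
    rw [IsIdempotentElem, mul_def, comp_assoc, h.self_comp_comp]
  isSelfAdjoint := h.isSelfAdjoint_comp

theorem norm_one_sub_comp_le (h : IsPseudoinverse A P) : ‖1 - A ∘L P‖ ≤ 1 :=
  h.isStarProjection_comp.one_sub.norm_le

theorem comp_one_sub_comp (h : IsPseudoinverse A P) : P ∘L (1 - A ∘L P) = 0 := by
  rw [comp_sub, h.self_comp_comp, one_def, comp_id, sub_self]

theorem one_sub_comp_comp_adjoint (h : IsPseudoinverse A P) : (1 - A ∘L P) ∘L P† = 0 := by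
  rw [← h.isStarProjection_comp.one_sub.isSelfAdjoint.adjoint_eq, ← adjoint_comp,
    h.comp_one_sub_comp, map_zero]

theorem adjoint_comp_one_sub_comp (h : IsPseudoinverse A P) : A† ∘L (1 - A ∘L P) = 0 := by
  rw [← h.adjoint_comp_adjoint]
  exact h.adjoint.symm.comp_one_sub_comp

theorem comp_comp_eq_of_ker_le (h₁ : IsPseudoinverse G₁ P₁) (h₂ : IsPseudoinverse G₂ P₂)
    (hker : G₂.ker ≤ G₁.ker) : P₂ ∘L G₂ ∘L P₁ = P₁ := by
  have G₁_comp : G₁ ∘L P₂ ∘L G₂ = G₁ := by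
    have : G₁ ∘L (1 - P₂ ∘L G₂) = 0 := by
      ext x
      exact hker congr($h₂.symm.comp_one_sub_comp x)
    simpa [comp_sub, sub_eq_zero, one_def, eq_comm] using this
  have comp_adjoint_G₁ : (P₂ ∘L G₂) ∘L G₁† = G₁† := by
    rw [← h₂.isSelfAdjoint_comp_rev.adjoint_eq, ← adjoint_comp, G₁_comp]
  have P₁_eq : P₁ = G₁† ∘L P₁† ∘L P₁ := by
    rw [← comp_assoc, h₁.symm.adjoint_comp_adjoint, comp_assoc, h₁.self_comp_comp]
  calc P₂ ∘L G₂ ∘L P₁ = ((P₂ ∘L G₂) ∘L G₁†) ∘L P₁† ∘L P₁ := by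
        rw [comp_assoc _ (G₁†), ← P₁_eq, comp_assoc]
    _ = P₁ := by rw [comp_adjoint_G₁, ← P₁_eq]

theorem sub_eq_of_ker_le (h₁ : IsPseudoinverse G₁ P₁) (h₂ : IsPseudoinverse G₂ P₂)
    (hker : G₂.ker ≤ G₁.ker) :
    P₂ - P₁ = P₂ ∘L (1 - G₁ ∘L P₁) - P₂ ∘L (G₂ - G₁) ∘L P₁ := by
  simp only [comp_sub, sub_comp, h₁.comp_comp_eq_of_ker_le h₂ hker, one_def, comp_id]
  abel

theorem comp_one_sub_comp_eq (h₁ : IsPseudoinverse G₁ P₁) (h₂ : IsPseudoinverse G₂ P₂) :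
    P₂ ∘L (1 - G₁ ∘L P₁) = P₂ ∘L P₂† ∘L (G₂ - G₁)† ∘L (1 - G₁ ∘L P₁) := by
  calc P₂ ∘L (1 - G₁ ∘L P₁) = P₂ ∘L (P₂† ∘L G₂†) ∘L (1 - G₁ ∘L P₁) := by
        rw [h₂.adjoint_comp_adjoint, ← comp_assoc P₂, h₂.self_comp_comp]
    _ = P₂ ∘L P₂† ∘L (G₂ - G₁)† ∘L (1 - G₁ ∘L P₁) := by
        rw [map_sub, sub_comp, h₁.adjoint_comp_one_sub_comp, sub_zero, comp_assoc]

theorem norm_comp_one_sub_comp_le (h₁ : IsPseudoinverse G₁ P₁) (h₂ : IsPseudoinverse G₂ P₂) :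
    ‖P₂ ∘L (1 - G₁ ∘L P₁)‖ ≤ ‖P₂‖ * ‖P₂‖ * ‖G₂ - G₁‖ :=
  calc ‖P₂ ∘L (1 - G₁ ∘L P₁)‖
      = ‖P₂ ∘L P₂† ∘L (G₂ - G₁)† ∘L (1 - G₁ ∘L P₁)‖ := by rw [← h₁.comp_one_sub_comp_eq h₂]
    _ ≤ ‖P₂‖ * (‖P₂†‖ * (‖(G₂ - G₁)†‖ * ‖1 - G₁ ∘L P₁‖)) := by
        grw [opNorm_comp_le, opNorm_comp_le, opNorm_comp_le]
    _ ≤ ‖P₂‖ * (‖P₂†‖ * (‖(G₂ - G₁)†‖ * 1)) := by grw [h₁.norm_one_sub_comp_le]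
    _ = ‖P₂‖ * ‖P₂‖ * ‖G₂ - G₁‖ := by simp only [LinearIsometryEquiv.norm_map]; ring

theorem norm_sub_sq_le_of_ker_le (h₁ : IsPseudoinverse G₁ P₁) (h₂ : IsPseudoinverse G₂ P₂)
    (hker : G₂.ker ≤ G₁.ker) :
    ‖P₂ - P₁‖ ^ 2 ≤ (‖P₁‖ ^ 2 + ‖P₂‖ ^ 2) * (‖P₂‖ * ‖G₂ - G₁‖) ^ 2 := by
  have orthogonal : (P₂ ∘L (1 - G₁ ∘L P₁)) ∘L (P₂ ∘L (G₂ - G₁) ∘L P₁)† = 0 := by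
    simp only [adjoint_comp, comp_assoc]
    rw [← comp_assoc (1 - G₁ ∘L P₁), h₁.one_sub_comp_comp_adjoint, zero_comp, comp_zero]
  have second_le : ‖P₂ ∘L (G₂ - G₁) ∘L P₁‖ ≤ ‖P₂‖ * (‖G₂ - G₁‖ * ‖P₁‖) := by
    grw [opNorm_comp_le, opNorm_comp_le]
  calc ‖P₂ - P₁‖ ^ 2
      ≤ ‖P₂ ∘L (1 - G₁ ∘L P₁)‖ ^ 2 + ‖P₂ ∘L (G₂ - G₁) ∘L P₁‖ ^ 2 := by
        rw [h₁.sub_eq_of_ker_le h₂ hker]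
        exact norm_sub_sq_le_of_comp_adjoint_eq_zero orthogonal
    _ ≤ (‖P₂‖ * ‖P₂‖ * ‖G₂ - G₁‖) ^ 2 + (‖P₂‖ * (‖G₂ - G₁‖ * ‖P₁‖)) ^ 2 := by
        grw [h₁.norm_comp_one_sub_comp_le h₂, second_le]
    _ = (‖P₁‖ ^ 2 + ‖P₂‖ ^ 2) * (‖P₂‖ * ‖G₂ - G₁‖) ^ 2 := by ring

theorem norm_sub_le_of_ker_eq (h₁ : IsPseudoinverse G₁ P₁) (h₂ : IsPseudoinverse G₂ P₂)
    (hker : G₁.ker = G₂.ker) :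
    ‖P₂ - P₁‖ ≤ √2 * ‖P₂‖ * ‖P₁‖ * ‖G₂ - G₁‖ := by
  wlog hle : ‖P₂‖ ≤ ‖P₁‖ generalizing G₁ G₂ P₁ P₂
  · rw [norm_sub_rev P₂, norm_sub_rev G₂, mul_right_comm √2]
    exact this h₂ h₁ hker.symm (le_of_not_ge hle)
  refine le_of_sq_le_sq ?_ (by positivity)
  calc ‖P₂ - P₁‖ ^ 2 ≤ (‖P₁‖ ^ 2 + ‖P₂‖ ^ 2) * (‖P₂‖ * ‖G₂ - G₁‖) ^ 2 :=
        h₁.norm_sub_sq_le_of_ker_le h₂ hker.ge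
    _ ≤ (‖P₁‖ ^ 2 + ‖P₁‖ ^ 2) * (‖P₂‖ * ‖G₂ - G₁‖) ^ 2 := by gcongr
    _ = (√2 * ‖P₂‖ * ‖P₁‖ * ‖G₂ - G₁‖) ^ 2 := by
        simp only [mul_pow, Real.sq_sqrt zero_le_two]
        ring

theorem norm_sub_le_of_range_eq (h₁ : IsPseudoinverse G₁ P₁) (h₂ : IsPseudoinverse G₂ P₂)
    (hrange : G₁.range = G₂.range) :
    ‖P₂ - P₁‖ ≤ √2 * ‖P₂‖ * ‖P₁‖ * ‖G₂ - G₁‖ := by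
  have hker : (G₁†).ker = (G₂†).ker := by rw [← orthogonal_range, ← orthogonal_range, hrange]
  simpa only [← map_sub, LinearIsometryEquiv.norm_map] using
    h₁.adjoint.norm_sub_le_of_ker_eq h₂.adjoint hker

end IsPseudoinverse

theorem pinv_perturbation_full_rank_general {G₁ G₂ : E →L[𝕜] F} {P₁ P₂ : F →L[𝕜] E}
    (h : G₁.ker = G₂.ker ∨ G₁.range = G₂.range)
    (hP₁ : IsPseudoinverse G₁ P₁) (hP₂ : IsPseudoinverse G₂ P₂) :
    ‖P₂ - P₁‖ ≤ √2 * ‖P₂‖ * ‖P₁‖ * ‖G₂ - G₁‖ :=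
  h.elim (hP₁.norm_sub_le_of_ker_eq hP₂) (hP₁.norm_sub_le_of_range_eq hP₂)

end Hilbert

theorem ker_eq_bot_of_finrank_range_eq {K V W : Type*} [DivisionRing K]
    [AddCommGroup V] [Module K V] [FiniteDimensional K V] [AddCommGroup W] [Module K W]
    {f : V →ₗ[K] W} (h : Module.finrank K f.range = Module.finrank K V) : f.ker = ⊥ := by
  have rank_nullity := f.finrank_range_add_finrank_ker
  exact Submodule.finrank_eq_zero.mp (by lia)

section EuclideanLin

variable {𝕜 l m n : Type*} [RCLike 𝕜] [Fintype n] [DecidableEq n]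

theorem finrank_range_toEuclideanLin [Finite m] (A : Matrix m n 𝕜) :
    Module.finrank 𝕜 (toEuclideanLin A).range = A.rank := by
  cases nonempty_fintype m
  rw [toEuclideanLin_eq_toLin_orthonormal, ← rank_eq_finrank_range_toLin]

theorem ker_eq_or_range_eq_of_rank_eq_min [Fintype m] {A B : Matrix m n 𝕜}
    (hA : A.rank = min (Fintype.card m) (Fintype.card n))
    (hB : B.rank = min (Fintype.card m) (Fintype.card n)) :
    (toEuclideanLin A).ker = (toEuclideanLin B).ker ∨
      (toEuclideanLin A).range = (toEuclideanLin B).range := by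
  rw [← finrank_range_toEuclideanLin] at hA hB
  rcases le_total (Fintype.card n) (Fintype.card m) with hle | hle
  · left
    rw [min_eq_right hle, ← finrank_euclideanSpace (𝕜 := 𝕜)] at hA hB
    rw [ker_eq_bot_of_finrank_range_eq hA, ker_eq_bot_of_finrank_range_eq hB]
  · right
    rw [min_eq_left hle, ← finrank_euclideanSpace (𝕜 := 𝕜)] at hA hB
    rw [Submodule.eq_top_of_finrank_eq hA, Submodule.eq_top_of_finrank_eq hB]

theorem toContinuousLinearMap_toEuclideanLin_mul [Fintype l]
    [Fintype m] [DecidableEq m] (A : Matrix l m 𝕜) (B : Matrix m n 𝕜) :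
    (toEuclideanLin (A * B)).toContinuousLinearMap =
      (toEuclideanLin A).toContinuousLinearMap ∘L (toEuclideanLin B).toContinuousLinearMap := by
  ext1 x
  simp

theorem isSelfAdjoint_toContinuousLinearMap_toEuclideanLin {A : Matrix n n 𝕜}
    (h : A.IsHermitian) : IsSelfAdjoint (toEuclideanLin A).toContinuousLinearMap :=
  ContinuousLinearMap.isSelfAdjoint_iff_isSymmetric.mpr (isSymmetric_toEuclideanLin_iff.mpr h)

end EuclideanLin

theorem IsMoorePenrose.isPseudoinverse {m n : ℕ} {A : Matrix (Fin m) (Fin n) ℂ}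
    {P : Matrix (Fin n) (Fin m) ℂ} (h : IsMoorePenrose A P) :
    IsPseudoinverse (toEuclideanLin A).toContinuousLinearMap
      (toEuclideanLin P).toContinuousLinearMap := by
  obtain ⟨hAPA, hPAP, hAP, hPA⟩ := h
  constructor <;> simp only [← toContinuousLinearMap_toEuclideanLin_mul]
  · rw [← Matrix.mul_assoc, hAPA]
  · rw [← Matrix.mul_assoc, hPAP]
  · exact isSelfAdjoint_toContinuousLinearMap_toEuclideanLin hAP
  · exact isSelfAdjoint_toContinuousLinearMap_toEuclideanLin hPA

/-- Wedin, full-rank case.  Let `G₁, G₂ ∈ ℂ^{m×n}` with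
`rank G₁ = rank G₂ = min{m,n}`.  Then
`‖G₂⁺ − G₁⁺‖ ≤ √2 · ‖G₂⁺‖ · ‖G₁⁺‖ · ‖G₂ − G₁‖` in the spectral norm. -/
theorem pinv_perturbation_full_rank
    {m n : ℕ} (G₁ G₂ : Matrix (Fin m) (Fin n) ℂ)
    (h₁ : G₁.rank = min m n) (h₂ : G₂.rank = min m n)
    (P₁ P₂ : Matrix (Fin n) (Fin m) ℂ)
    (hP₁ : IsMoorePenrose G₁ P₁) (hP₂ : IsMoorePenrose G₂ P₂) :
    specNorm (P₂ - P₁) ≤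
      Real.sqrt 2 * specNorm P₂ * specNorm P₁ * specNorm (G₂ - G₁) := by
  have h := ker_eq_or_range_eq_of_rank_eq_min (A := G₁) (B := G₂) (by simpa) (by simpa)
  simp only [specNorm, map_sub]
  exact pinv_perturbation_full_rank_general h hP₁.isPseudoinverse hP₂.isPseudoinverse
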